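/- (Gaussian max anti-concentration, as used in the paper) Let $(Z_1, \ldots, Z_p)$ be a centered Gaussian vector with $E[Z_j^2] = \sigma^2$ for all $j$, where $p \ge 2$. Then for every $\epsilon > 0$, $\sup_{x \in \mathbb{R}} P(\max_{1 \le j \le p} Z_j \in [x - \epsilon, x + \epsilon]) \le 12\epsilon\sqrt{\log p}/\sigma$. -/

import Mathlib

open MeasureTheory ProbabilityTheory

/-!
Write each coordinate of the Gaussian vector as its regression on `X j` plus an independent
residual. All variances being equal, the regression coefficients are at most `1`, so raising the
value `t` of `X j` only makes it more likely that `X j` is the maximum: the conditional probability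
of this event given `X j = t` is monotone in `t`. Summing over `j`, the maximum has a monotone
density `G ≤ p` with respect to the common law of the coordinates. Multiplied by the Gaussian
density, a monotone `G` of total mass at most `1` is of order `√(log p) / σ`: up to `√(2 log p)`
standard deviations above the mean because the Gaussian density decays slowly there, and beyond
because `G ≤ p`. This product is the Lebesgue density of the maximum.
-/

open scoped ENNReal NNReal

section LastArgmax

variable {ι α : Type*} [LinearOrder ι]

/-- `j` is the argmax of `x`, ties being broken in favour of the largest index. Unlike the plain
argmax it is unique, so it partitions the space of vectors `x`. -/
def IsLastArgmax [LinearOrder α] (x : ι → α) (j : ι) : Prop :=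
  ∀ i, toLex (x i, i) ≤ toLex (x j, j)

lemma isLastArgmax_iff [LinearOrder α] {x : ι → α} {j : ι} :
    IsLastArgmax x j ↔ ∀ i, x i ≤ x j ∧ (x i = x j → i ≤ j) :=
  forall_congr' fun _ ↦ Prod.Lex.le_iff'

lemma exists_isLastArgmax [LinearOrder α] [Finite ι] [Nonempty ι] (x : ι → α) :
    ∃ j, IsLastArgmax x j :=
  Finite.exists_max fun i ↦ toLex (x i, i)

lemma IsLastArgmax.unique [LinearOrder α] {x : ι → α} {i j : ι} (hi : IsLastArgmax x i)
    (hj : IsLastArgmax x j) : i = j :=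
  congrArg (fun q ↦ (ofLex q).2) (le_antisymm (hj i) (hi j))

lemma IsLastArgmax.iSup_eq [ConditionallyCompleteLinearOrder α] {x : ι → α} {j : ι}
    (h : IsLastArgmax x j) : ⨆ i, x i = x j :=
  IsGreatest.csSup_eq
    ⟨Set.mem_range_self j, Set.forall_mem_range.2 fun i ↦ (isLastArgmax_iff.1 h i).1⟩

lemma IsLastArgmax.of_sub_le_sub {x y : ι → ℝ} {j : ι} (h : IsLastArgmax x j)
    (hxy : ∀ i, x j - x i ≤ y j - y i) : IsLastArgmax y j := by
  rw [isLastArgmax_iff] at h ⊢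
  intro i
  have hgap := hxy i
  have hle := (h i).1
  exact ⟨by linarith, fun hy ↦ (h i).2 (by linarith)⟩

lemma measurableSet_isLastArgmax [Countable ι] (j : ι) :
    MeasurableSet {x : ι → ℝ | IsLastArgmax x j} := by
  simp only [isLastArgmax_iff]
  measurability

lemma measure_iSup_mem_eq_sum [Fintype ι] [Nonempty ι] (μ : Measure (ι → ℝ)) {A : Set ℝ}
    (hA : MeasurableSet A) :
    μ {x | (⨆ i, x i) ∈ A} = ∑ j, μ {x | x j ∈ A ∧ IsLastArgmax x j} := by
  have hunion : {x : ι → ℝ | (⨆ i, x i) ∈ A} = ⋃ j, {x | x j ∈ A ∧ IsLastArgmax x j} := by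
    ext x
    simp only [Set.mem_ofPred_eq, Set.mem_iUnion]
    constructor
    · intro hx
      obtain ⟨j, hj⟩ := exists_isLastArgmax x
      exact ⟨j, hj.iSup_eq ▸ hx, hj⟩
    · rintro ⟨j, hx, hj⟩
      rwa [hj.iSup_eq]
  rw [hunion, measure_iUnion, tsum_fintype]
  · exact fun i j hij ↦ Set.disjoint_left.2 fun x hi hj ↦ hij (hi.2.unique hj.2)
  · exact fun j ↦ (measurable_pi_apply j hA).inter (measurableSet_isLastArgmax j)

end LastArgmax

section Regression

variable {Ω ι : Type*} [MeasurableSpace Ω] {P : Measure Ω} {X : ι → Ω → ℝ}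

lemma covariance_le_variance_right [IsFiniteMeasure P] {Y Z : Ω → ℝ} (hY : MemLp Y 2 P)
    (hZ : MemLp Z 2 P) (h : Var[Y; P] ≤ Var[Z; P]) : cov[Y, Z; P] ≤ Var[Z; P] := by
  have hsub := variance_sub hY hZ
  have hnonneg := variance_nonneg (Y - Z) P
  linarith

variable (P X) in
/-- The coefficients `Cov(Xᵢ, Xⱼ) / Var(Xⱼ)` of the linear regression of the vector `X` on its
coordinate `Xⱼ`. -/
noncomputable def regressionCoeff (j : ι) : ι → ℝ :=
  fun i ↦ cov[X i, X j; P] / Var[X j; P]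

variable (P X) in
/-- The part of the vector `X` that its linear regression on `Xⱼ` does not explain. For a Gaussian
vector, conditioning on `Xⱼ = t` gives `X` the law of
`regressionResidual P X j + t • regressionCoeff P X j`. -/
noncomputable def regressionResidual (j : ι) (ω : Ω) : ι → ℝ :=
  (X · ω) - X j ω • regressionCoeff P X j

lemma regressionCoeff_self {j : ι} (hX : AEMeasurable (X j) P) (hvar : Var[X j; P] ≠ 0) :
    regressionCoeff P X j j = 1 := by
  rw [regressionCoeff, covariance_self hX, div_self hvar]

lemma regressionCoeff_le_one [IsFiniteMeasure P] {i j : ι} (hi : MemLp (X i) 2 P)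
    (hj : MemLp (X j) 2 P) (hvar : Var[X i; P] ≤ Var[X j; P]) : regressionCoeff P X j i ≤ 1 :=
  div_le_one_of_le₀ (covariance_le_variance_right hi hj hvar) (variance_nonneg _ _)

lemma covariance_regressionResidual_eq_zero [IsFiniteMeasure P] (hX : ∀ i, MemLp (X i) 2 P) {j : ι}
    (hvar : Var[X j; P] ≠ 0) (i : ι) :
    cov[X j, fun ω ↦ regressionResidual P X j ω i; P] = 0 := by
  simp only [regressionResidual, Pi.sub_apply, Pi.smul_apply, smul_eq_mul]
  rw [covariance_fun_sub_right (hX j) (hX i) ((hX j).mul_const _), covariance_mul_const_right,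
    covariance_self (hX j).aemeasurable, covariance_comm, regressionCoeff, mul_div_cancel₀ _ hvar,
    sub_self]

variable [Finite ι]

lemma indepFun_regressionResidual (hX : HasGaussianLaw (fun ω ↦ (X · ω)) P) {j : ι}
    (hvar : Var[X j; P] ≠ 0) : IndepFun (X j) (regressionResidual P X j) P := by
  have := hX.isProbabilityMeasure
  have := Fintype.ofFinite ι
  let L : (ι → ℝ) →L[ℝ] (Unit → ℝ) × (ι → ℝ) :=
    (ContinuousLinearMap.pi fun _ ↦ .proj j).prod
      (.id ℝ _ - (ContinuousLinearMap.proj j).smulRight (regressionCoeff P X j))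
  have hindep : IndepFun (fun ω (_ : Unit) ↦ X j ω) (fun ω i ↦ regressionResidual P X j ω i) P :=
    HasGaussianLaw.indepFun_of_covariance_eval (hX.map_fun L) fun _ i ↦
      covariance_regressionResidual_eq_zero (fun i ↦ (hX.eval i).memLp_two) hvar i
  exact hindep.comp (measurable_pi_apply ()) measurable_id

lemma map_mem_and_mem_eq_setLIntegral (hX : HasGaussianLaw (fun ω ↦ (X · ω)) P) {j : ι}
    (hvar : Var[X j; P] ≠ 0) {A : Set ℝ} (hA : MeasurableSet A) {S : Set (ι → ℝ)}
    (hS : MeasurableSet S) :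
    P.map (fun ω ↦ (X · ω)) {x | x j ∈ A ∧ x ∈ S} =
      ∫⁻ t in A, P {ω | regressionResidual P X j ω + t • regressionCoeff P X j ∈ S}
        ∂(P.map (X j)) := by
  have := hX.isProbabilityMeasure
  have hXj : AEMeasurable (X j) P := (hX.eval j).aemeasurable
  have hR : AEMeasurable (regressionResidual P X j) P :=
    hX.aemeasurable.sub (hXj.smul_const _)
  let T : Set (ℝ × (ι → ℝ)) := {q | q.1 ∈ A ∧ q.2 + q.1 • regressionCoeff P X j ∈ S}
  have hT : MeasurableSet T :=
    (measurable_fst hA).inter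
      ((by fun_prop : Measurable fun q : ℝ × (ι → ℝ) ↦ q.2 + q.1 • regressionCoeff P X j) hS)
  have hpair : (fun ω ↦ (X · ω)) ⁻¹' {x | x j ∈ A ∧ x ∈ S} =
      (fun ω ↦ (X j ω, regressionResidual P X j ω)) ⁻¹' T := by
    ext ω
    simp [T, regressionResidual]
  have hjS : MeasurableSet {x : ι → ℝ | x j ∈ A ∧ x ∈ S} := (measurable_pi_apply j hA).inter hS
  rw [Measure.map_apply_of_aemeasurable hX.aemeasurable hjS, hpair,
    ← Measure.map_apply_of_aemeasurable (hXj.prodMk hR) hT,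
    (indepFun_iff_map_prod_eq_prod_map_map hXj hR).1 (indepFun_regressionResidual hX hvar),
    Measure.prod_apply hT, ← lintegral_indicator hA]
  refine lintegral_congr fun t ↦ ?_
  by_cases ht : t ∈ A
  · rw [Set.indicator_of_mem ht, Measure.map_apply_of_aemeasurable hR (measurable_prodMk_left hT)]
    simp [T, ht, Set.preimage]
  · simp [T, ht]

end Regression

section MaxDensity

variable {Ω ι : Type*} [MeasurableSpace Ω] {P : Measure Ω} {X : ι → Ω → ℝ} [LinearOrder ι]

variable (P X) in
/-- For a Gaussian vector `X`, the conditional probability given `Xⱼ = t` that `Xⱼ` is the maximum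
of `X` (with ties broken as in `IsLastArgmax`). -/
noncomputable def argmaxProb (j : ι) (t : ℝ) : ℝ≥0∞ :=
  P {ω | IsLastArgmax (regressionResidual P X j ω + t • regressionCoeff P X j) j}

lemma monotone_argmaxProb [IsFiniteMeasure P] {j : ι} (hX : ∀ i, MemLp (X i) 2 P)
    (hvar : Var[X j; P] ≠ 0) (hmax : ∀ i, Var[X i; P] ≤ Var[X j; P]) :
    Monotone (argmaxProb P X j) := by
  intro s t hst
  -- Going from `s` to `t` raises coordinate `j` by `t - s` and the others by at most that much.
  refine measure_mono fun ω hω ↦ IsLastArgmax.of_sub_le_sub hω fun i ↦ ?_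
  have hcoeff := regressionCoeff_le_one (hX i) (hX j) (hmax i)
  simp only [Pi.add_apply, Pi.smul_apply, smul_eq_mul,
    regressionCoeff_self (hX j).aemeasurable hvar]
  nlinarith

variable [Fintype ι]

variable (P X) in
/-- The density of `maxⱼ Xⱼ` with respect to the common law of the coordinates `Xⱼ` of a Gaussian
vector `X`. -/
noncomputable def maxDensity (t : ℝ) : ℝ≥0∞ := ∑ j, argmaxProb P X j t

lemma maxDensity_le_card [IsProbabilityMeasure P] (t : ℝ) :
    maxDensity P X t ≤ Fintype.card ι :=
  calc
    maxDensity P X t ≤ ∑ _ : ι, 1 := Finset.sum_le_sum fun _ _ ↦ prob_le_one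
    _ = Fintype.card ι := by simp

variable {m : ℝ} {v : ℝ≥0}

lemma variance_eq_of_hasLaw_gaussianReal {Y : Ω → ℝ} (hY : HasLaw Y (gaussianReal m v) P) :
    Var[Y; P] = v := by
  rw [hY.variance_eq, variance_id_gaussianReal]

lemma monotone_maxDensity (hlaw : ∀ j, HasLaw (X j) (gaussianReal m v) P) (hv : v ≠ 0) :
    Monotone (maxDensity P X) := by
  intro s t hst
  refine Finset.sum_le_sum fun j _ ↦ ?_
  have := (hlaw j).isProbabilityMeasure
  have hvar i : Var[X i; P] = v := variance_eq_of_hasLaw_gaussianReal (hlaw i)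
  exact monotone_argmaxProb (fun i ↦ (hlaw i).hasGaussianLaw.memLp_two)
    (by simpa [hvar] using hv) (fun i ↦ by rw [hvar, hvar]) hst

lemma hasLaw_iSup_withDensity_maxDensity [Nonempty ι]
    (hX : HasGaussianLaw (fun ω ↦ (X · ω)) P) (hlaw : ∀ j, HasLaw (X j) (gaussianReal m v) P)
    (hv : v ≠ 0) :
    HasLaw (fun ω ↦ ⨆ j, X j ω) ((gaussianReal m v).withDensity (maxDensity P X)) P := by
  have hsup : Measurable fun x : ι → ℝ ↦ ⨆ j, x j := .iSup measurable_pi_apply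
  refine ⟨hsup.comp_aemeasurable hX.aemeasurable, ?_⟩
  have := hX.isProbabilityMeasure
  have hvar j : Var[X j; P] = v := variance_eq_of_hasLaw_gaussianReal (hlaw j)
  have hvar_ne j : Var[X j; P] ≠ 0 := by simpa [hvar] using hv
  have hmono j : Monotone (argmaxProb P X j) :=
    monotone_argmaxProb (fun i ↦ (hX.eval i).memLp_two) (hvar_ne j) fun i ↦ by rw [hvar, hvar]
  ext A hA
  calc
    P.map (fun ω ↦ ⨆ j, X j ω) A = P.map (fun ω ↦ (X · ω)) {x | (⨆ j, x j) ∈ A} := by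
      rw [← Function.comp_def (fun x : ι → ℝ ↦ ⨆ j, x j),
        ← AEMeasurable.map_map_of_aemeasurable hsup.aemeasurable hX.aemeasurable,
        Measure.map_apply hsup hA]
      rfl
    _ = ∑ j, P.map (fun ω ↦ (X · ω)) {x | x j ∈ A ∧ IsLastArgmax x j} :=
      measure_iSup_mem_eq_sum _ hA
    _ = ∑ j, ∫⁻ t in A, argmaxProb P X j t ∂(gaussianReal m v) :=
      Finset.sum_congr rfl fun j _ ↦ by
        rw [← (hlaw j).map_eq]
        exact map_mem_and_mem_eq_setLIntegral hX (hvar_ne j) hA (measurableSet_isLastArgmax j)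
    _ = (gaussianReal m v).withDensity (maxDensity P X) A := by
      rw [withDensity_apply _ hA, ← lintegral_finsetSum _ fun j _ ↦ (hmono j).measurable]
      rfl

end MaxDensity

section GaussianPDF

variable {m t : ℝ} {v : ℝ≥0}

lemma gaussianPDFReal_mul_exp_neg_le {c u : ℝ} (h : (u - m) ^ 2 ≤ (t - m) ^ 2 + 2 * v * c) :
    gaussianPDFReal m v t * Real.exp (-c) ≤ gaussianPDFReal m v u := by
  obtain rfl | hv := eq_or_ne v 0
  · simp
  rw [gaussianPDFReal, gaussianPDFReal, mul_assoc, ← Real.exp_add]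
  gcongr
  have hv' : (0 : ℝ) < 2 * v := by positivity
  rw [neg_div, neg_div, ← neg_add, neg_le_neg_iff, div_le_iff₀ hv', add_mul,
    div_mul_cancel₀ _ hv'.ne']
  linarith

lemma gaussianPDFReal_le_inv_div {n : ℝ} (hn : 0 < n) (h : Real.log n ≤ (t - m) ^ 2 / (2 * v)) :
    gaussianPDFReal m v t ≤ (√(2 * Real.pi * v))⁻¹ / n := by
  rw [gaussianPDFReal, div_eq_mul_inv _ n, neg_div]
  gcongr
  calc
    Real.exp (-((t - m) ^ 2 / (2 * v))) ≤ Real.exp (-Real.log n) := by gcongr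
    _ = n⁻¹ := by rw [Real.exp_neg, Real.exp_log hn]

lemma ofReal_mul_le_lintegral_mul_of_monotone {f g : ℝ → ℝ≥0∞} (hg : Monotone g) {c : ℝ≥0∞}
    {d : ℝ} (hf : ∀ u ∈ Set.Icc t (t + d), c ≤ f u) :
    ENNReal.ofReal d * (c * g t) ≤ ∫⁻ u, f u * g u :=
  calc
    ENNReal.ofReal d * (c * g t) = ∫⁻ _ in Set.Icc t (t + d), c * g t := by
      rw [setLIntegral_const, Real.volume_Icc, add_sub_cancel_left, mul_comm]
    _ ≤ ∫⁻ u in Set.Icc t (t + d), f u * g u :=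
      setLIntegral_mono' measurableSet_Icc fun u hu ↦ mul_le_mul' (hf u hu) (hg hu.1)
    _ ≤ ∫⁻ u, f u * g u := setLIntegral_le_lintegral _ _

lemma gaussianPDF_mul_le_exp_div {g : ℝ → ℝ≥0∞} (hv : v ≠ 0) (hg : Monotone g)
    (hint : ∫⁻ u, g u ∂(gaussianReal m v) ≤ 1) {c d : ℝ} (hc : 0 ≤ c) (hd : 0 < d)
    (hcd : d * (2 * (t - m) + d) ≤ 2 * v * c) :
    gaussianPDF m v t * g t ≤ ENNReal.ofReal (Real.exp c / d) := by
  have hpdf : ∀ u ∈ Set.Icc t (t + d),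
      ENNReal.ofReal (Real.exp (-c)) * gaussianPDF m v t ≤ gaussianPDF m v u := by
    intro u hu
    rw [gaussianPDF, ← ENNReal.ofReal_mul (Real.exp_nonneg _), mul_comm]
    refine ENNReal.ofReal_le_ofReal (gaussianPDFReal_mul_exp_neg_le ?_)
    obtain ⟨htu, hud⟩ := hu
    have hvc : 0 ≤ 2 * v * c := by positivity
    rcases le_total (2 * (t - m) + (u - t)) 0 with h | h <;> nlinarith
  have hmass : ENNReal.ofReal (d * Real.exp (-c)) * (gaussianPDF m v t * g t) ≤ 1 :=
    calc
      _ = ENNReal.ofReal d * (ENNReal.ofReal (Real.exp (-c)) * gaussianPDF m v t * g t) := by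
        rw [ENNReal.ofReal_mul hd.le]
        ring
      _ ≤ ∫⁻ u, gaussianPDF m v u * g u := ofReal_mul_le_lintegral_mul_of_monotone hg hpdf
      _ = ∫⁻ u, g u ∂(gaussianReal m v) := by
        rw [gaussianReal_of_var_ne_zero _ hv,
          lintegral_withDensity_eq_lintegral_mul _ (measurable_gaussianPDF m v) hg.measurable]
        rfl
      _ ≤ 1 := hint
  have hpos : 0 < d * Real.exp (-c) := by positivity
  rw [show Real.exp c / d = (d * Real.exp (-c))⁻¹ by
    rw [mul_inv, Real.exp_neg, inv_inv, mul_comm, div_eq_mul_inv], ENNReal.ofReal_inv_of_pos hpos]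
  exact ENNReal.le_inv_iff_mul_le.2 (by rwa [mul_comm])

lemma gaussianPDF_mul_le_inv_sqrt {n : ℝ} (hn : 0 < n) {a : ℝ≥0∞} (ha : a ≤ ENNReal.ofReal n)
    (h : Real.log n ≤ (t - m) ^ 2 / (2 * v)) :
    gaussianPDF m v t * a ≤ ENNReal.ofReal (√(2 * Real.pi * v))⁻¹ :=
  calc
    gaussianPDF m v t * a
      ≤ ENNReal.ofReal ((√(2 * Real.pi * v))⁻¹ / n) * ENNReal.ofReal n :=
      mul_le_mul' (ENNReal.ofReal_le_ofReal (gaussianPDFReal_le_inv_div hn h)) ha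
    _ = ENNReal.ofReal (√(2 * Real.pi * v))⁻¹ := by
      rw [← ENNReal.ofReal_mul (by positivity), div_mul_cancel₀ _ hn.ne']

lemma gaussianPDF_mul_le_of_sub_le_sqrt {g : ℝ → ℝ≥0∞} (hv : v ≠ 0) (hg : Monotone g)
    (hint : ∫⁻ u, g u ∂(gaussianReal m v) ≤ 1) {L : ℝ} (hL : 1 / 2 ≤ L)
    (ht : t - m ≤ √(2 * L * v)) :
    gaussianPDF m v t * g t ≤ ENNReal.ofReal (6 * √L / √v) := by
  have hsqrtL : 0 < √L := Real.sqrt_pos.2 (by linarith)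
  have hsqrtv : 0 < √(v : ℝ) := Real.sqrt_pos.2 (by positivity)
  -- Between `t` and `t + √v / (2 √L)` the density drops at most by a factor `e`.
  have hstep : √v / (2 * √L) * (2 * (t - m) + √v / (2 * √L)) ≤ 2 * v * 1 :=
    calc
      _ ≤ √v / (2 * √L) * (2 * (√2 * √L * √v) + √v / (2 * √L)) := by
        rw [Real.sqrt_mul (by positivity), Real.sqrt_mul zero_le_two] at ht
        gcongr
      _ = (√2 + 1 / (4 * √L ^ 2)) * √v ^ 2 := by
        field_simp
        ring
      _ = (√2 + 1 / (4 * L)) * v := by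
        rw [Real.sq_sqrt v.coe_nonneg, Real.sq_sqrt (by linarith)]
      _ ≤ (3 / 2 + 1 / (4 * (1 / 2))) * v := by
        gcongr
        exact Real.sqrt_le_iff.2 (by norm_num)
      _ = 2 * v * 1 := by ring
  refine (gaussianPDF_mul_le_exp_div hv hg hint zero_le_one (by positivity) hstep).trans
    (ENNReal.ofReal_le_ofReal ?_)
  calc
    Real.exp 1 / (√v / (2 * √L)) = 2 * Real.exp 1 * √L / √v := by field_simp
    _ ≤ 6 * √L / √v := by
      gcongr
      linarith [Real.exp_one_lt_d9]

lemma inv_sqrt_two_pi_mul_le {x : ℝ} : (√(2 * Real.pi * x))⁻¹ ≤ 1 / √x := by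
  rw [Real.sqrt_mul (by positivity), mul_inv, one_div]
  refine mul_le_of_le_one_left (by positivity) (inv_le_one_of_one_le₀ ?_)
  exact Real.one_le_sqrt.2 (by linarith [Real.pi_gt_three])

lemma gaussianPDF_mul_le_of_monotone {g : ℝ → ℝ≥0∞} (hv : v ≠ 0) (hg : Monotone g)
    (hint : ∫⁻ u, g u ∂(gaussianReal m v) ≤ 1) {n : ℝ} (hn : 2 ≤ n)
    (hgn : g t ≤ ENNReal.ofReal n) :
    gaussianPDF m v t * g t ≤ ENNReal.ofReal (6 * √(Real.log n) / √v) := by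
  have hlog : 1 / 2 ≤ Real.log n := by
    linarith [Real.log_le_log two_pos hn, Real.log_two_gt_d9]
  -- Below the threshold the Gaussian density varies slowly on the scale `√v / √(log n)`, so the
  -- total mass of `g` bounds `g t`; above it the Gaussian tail compensates for `g t ≤ n`.
  rcases le_or_gt (t - m) √(2 * Real.log n * v) with ht | ht
  · exact gaussianPDF_mul_le_of_sub_le_sqrt hv hg hint hlog ht
  · have htail : Real.log n ≤ (t - m) ^ 2 / (2 * v) := by
      rw [le_div_iff₀ (by positivity)]
      linarith [Real.lt_sq_of_sqrt_lt ht]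
    refine (gaussianPDF_mul_le_inv_sqrt (by linarith) hgn htail).trans
      (ENNReal.ofReal_le_ofReal (inv_sqrt_two_pi_mul_le.trans ?_))
    have hsqrt_log : 1 / 2 ≤ √(Real.log n) := Real.le_sqrt_of_sq_le (by linarith)
    gcongr
    linarith

end GaussianPDF

section GaussianVector

variable {Ω ι : Type*} [MeasurableSpace Ω] {P : Measure Ω} {X : ι → Ω → ℝ} [Fintype ι]

lemma hasGaussianLaw_of_forall_sum_mul (hX : ∀ j, AEMeasurable (X j) P)
    (h : ∀ c : ι → ℝ, ∃ m v, P.map (fun ω ↦ ∑ j, c j * X j ω) = gaussianReal m v) :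
    HasGaussianLaw (fun ω ↦ (X · ω)) P := by
  classical
  refine ⟨isGaussian_of_map_eq_gaussianReal fun L ↦ ?_⟩
  obtain ⟨m, v, hmv⟩ := h fun j ↦ L fun i ↦ if j = i then 1 else 0
  refine ⟨m, v, ?_⟩
  rw [AEMeasurable.map_map_of_aemeasurable (by fun_prop) (aemeasurable_pi_lambda _ hX), ← hmv]
  congr 1 with ω
  simpa [mul_comm] using L.toLinearMap.pi_apply_eq_sum_univ (X · ω)

lemma hasLaw_gaussianReal_of_integral_sq {Y : Ω → ℝ} (hY : AEMeasurable Y P) {v w : ℝ≥0}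
    (hlaw : P.map Y = gaussianReal 0 v) (hsq : ∫ ω, Y ω ^ 2 ∂P = w) :
    HasLaw Y (gaussianReal 0 w) P := by
  have hYv : HasLaw Y (gaussianReal 0 v) P := ⟨hY, hlaw⟩
  have hmean : ∫ ω, Y ω ∂P = 0 := by rw [hYv.integral_eq, integral_id_gaussianReal]
  have hvw : (v : ℝ) = w := by
    rw [← variance_eq_of_hasLaw_gaussianReal hYv, variance_of_integral_eq_zero hY hmean, hsq]
  rwa [← NNReal.coe_injective hvw]

theorem gaussian_max_anticoncentration_general [Nontrivial ι] {m : ℝ} {v : ℝ≥0}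
    (hX : HasGaussianLaw (fun ω ↦ (X · ω)) P) (hlaw : ∀ j, HasLaw (X j) (gaussianReal m v) P)
    (hv : v ≠ 0) :
    P.map (fun ω ↦ ⨆ j, X j ω) ≤
      ENNReal.ofReal (6 * √(Real.log (Fintype.card ι)) / √v) • volume := by
  let : LinearOrder ι := LinearOrder.lift' (Fintype.equivFin ι) (Fintype.equivFin ι).injective
  have := hX.isProbabilityMeasure
  have hmono := monotone_maxDensity hlaw hv
  have hmax := hasLaw_iSup_withDensity_maxDensity hX hlaw hv
  have hmass : ∫⁻ t, maxDensity P X t ∂(gaussianReal m v) ≤ 1 := by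
    have := hmax.isProbabilityMeasure_iff.1 inferInstance
    rw [← setLIntegral_univ, ← withDensity_apply _ .univ]
    exact prob_le_one
  have hcard : (2 : ℝ) ≤ Fintype.card ι := by
    exact_mod_cast Fintype.one_lt_card (α := ι)
  rw [hmax.map_eq, gaussianReal_of_var_ne_zero _ hv,
    ← withDensity_mul _ (measurable_gaussianPDF m v) hmono.measurable, ← withDensity_const]
  refine withDensity_mono (.of_forall fun t ↦ ?_)
  exact gaussianPDF_mul_le_of_monotone hv hmono hmass hcard
    (by simpa using maxDensity_le_card t)

end GaussianVector

/-- **Gaussian max anti-concentration** (Chernozhukov–Chetverikov–Kato).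
Let `(Z₁, …, Z_p)` be a centered Gaussian vector (every linear combination is
a centered Gaussian) with `E[Z_j²] = σ²` for all `j` and `p ≥ 2`. Then for
every `ε > 0`, `sup_x P(max_j Z_j ∈ [x-ε, x+ε]) ≤ 12 ε √(log p) / σ`. -/
theorem gaussian_max_anticoncentration
    {Ω : Type*} [MeasurableSpace Ω] (P : Measure Ω) [IsProbabilityMeasure P]
    (p : ℕ) (hp : 2 ≤ p) (Z : Fin p → Ω → ℝ)
    (hmeas : ∀ j, Measurable (Z j))
    -- (Z₁, …, Z_p) is a centered Gaussian vector: every linear combination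
    -- has a centered Gaussian distribution
    (hgauss : ∀ c : Fin p → ℝ, ∃ v : NNReal,
      Measure.map (fun ω => ∑ j, c j * Z j ω) P = gaussianReal 0 v)
    (σ : ℝ) (hσ : 0 < σ)
    (hvar : ∀ j, ∫ ω, (Z j ω) ^ 2 ∂P = σ ^ 2) :
    ∀ ε > (0 : ℝ), ∀ x : ℝ,
      (P {ω | (⨆ j, Z j ω) ∈ Set.Icc (x - ε) (x + ε)}).toReal ≤
        12 * ε * Real.sqrt (Real.log p) / σ := by
  intro ε hε x
  lift σ to ℝ≥0 using hσ.le
  have := Fin.nontrivial_iff_two_le.2 hp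
  have hlaw j : HasLaw (Z j) (gaussianReal 0 (σ ^ 2)) P := by
    obtain ⟨v, hv⟩ := hgauss (Pi.single j 1)
    exact hasLaw_gaussianReal_of_integral_sq (hmeas j).aemeasurable
      (by simpa [Pi.single_apply] using hv) (by simpa using hvar j)
  have hZ : HasGaussianLaw (fun ω ↦ (Z · ω)) P :=
    hasGaussianLaw_of_forall_sum_mul (fun j ↦ (hmeas j).aemeasurable) fun c ↦ ⟨0, hgauss c⟩
  have hbound := gaussian_max_anticoncentration_general hZ hlaw
    (pow_ne_zero 2 (by exact_mod_cast hσ.ne')) (Set.Icc (x - ε) (x + ε))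
  rw [Measure.map_apply (.iSup hmeas) measurableSet_Icc] at hbound
  refine ENNReal.toReal_le_of_le_ofReal (by positivity) (hbound.trans_eq ?_)
  rw [Measure.smul_apply, smul_eq_mul, Real.volume_Icc, ← ENNReal.ofReal_mul (by positivity)]
  congr 1
  simp only [Fintype.card_fin, NNReal.coe_pow, Real.sqrt_sq hσ.le]
  ring
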